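/- (Bernstein-type inequality for complex Gaussian quadratic forms) Let M ≥ 1, let Y ∈ ℂ^{M×M} be Hermitian and u ∈ ℂ^M. Let x be a random vector in ℂ^M whose 2M real coordinates (the real and imaginary parts of each of the M complex entries) are independent real Gaussian random variables, each with mean 0 and variance 1/2 (i.e., x ~ CN(0, I_M)). Define f(x) = x^H Y x + 2 Re(x^H u), a real-valued random variable. Then for every δ > 0, Pr( f(x) ≥ Tr(Y) − √(2δ)·√(‖Y‖_F^2 + 2‖u‖^2) − δ·s⁺(−Y) ) ≥ 1 − e^{−δ}, where s⁺(Z) = max{λ_max(Z), 0} and λ_max denotes the largest eigenvalue of a Hermitian matrix. -/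

import Mathlib

open Matrix BigOperators MeasureTheory ProbabilityTheory
open scoped ENNReal NNReal

noncomputable section

/-- The Euclidean norm of a vector in `ℂ^M`. -/
def enorm' {M : ℕ} (v : Fin M → ℂ) : ℝ :=
  Real.sqrt (∑ i, ‖v i‖ ^ 2)

/-- The Frobenius norm of a complex matrix. -/
def fnorm {M : ℕ} (A : Matrix (Fin M) (Fin M) ℂ) : ℝ :=
  Real.sqrt (∑ i, ∑ j, ‖A i j‖ ^ 2)

/-- The largest eigenvalue of a Hermitian matrix. -/
def lamMax {M : ℕ} {Z : Matrix (Fin M) (Fin M) ℂ} (hZ : Z.IsHermitian) : ℝ :=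
  ⨆ i, hZ.eigenvalues i

/-- The distribution of a standard circularly symmetric complex Gaussian vector
`x ~ CN(0, I_M)`: each complex coordinate is represented by a pair of independent real
Gaussian coordinates (its real and imaginary parts), each with mean `0` and
variance `1/2`. -/
def stdComplexGaussian (M : ℕ) : Measure (Fin M → ℝ × ℝ) :=
  Measure.pi fun _ : Fin M => (gaussianReal 0 (1 / 2)).prod (gaussianReal 0 (1 / 2))

/-- Reassemble the complex vector from its real and imaginary coordinates. -/
def toC {M : ℕ} (w : Fin M → ℝ × ℝ) : Fin M → ℂ :=
  fun i => Complex.mk (w i).1 (w i).2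

/-! Diagonalise `Y` by a unitary matrix, which preserves `CN(0, I)`. Then `Tr Y - f(x)` becomes
`∑ i, (mᵢ (|zᵢ|² - 1) + 2 Re(z̄ᵢ qᵢ))` with independent `zᵢ`, where `m` lists the eigenvalues of
`-Y` and `q` is a rotation of `-u`. Each summand is sub-gamma with variance factor
`mᵢ² + 2 |qᵢ|²` and scale `s⁺(-Y)`. Variance factors add up over independent summands, here to
`‖Y‖_F² + 2 ‖u‖²`, and the Chernoff bound for sub-gamma variables gives the inequality. -/

section SubGamma

variable {Ω Ω' : Type*} {mΩ : MeasurableSpace Ω} {mΩ' : MeasurableSpace Ω'}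
  {μ : Measure Ω} {X : Ω → ℝ} {v s δ : ℝ}

/-- A real random variable `X` is sub-gamma on the right, with variance factor `v` and scale `s`:
`𝔼 exp (t X) ≤ exp (t² v / (2 (1 - t s)))` for all `t ≥ 0` with `t s < 1`. The variable is not
required to be centred, and integrability is part of the notion because `mgf` is `0` when
`exp (t X)` is not integrable. -/
structure HasSubgammaMGF (X : Ω → ℝ) (v s : ℝ) (μ : Measure Ω) : Prop where
  integrable_exp_mul (t : ℝ) (ht : 0 ≤ t) (hts : t * s < 1) :
    Integrable (fun ω ↦ Real.exp (t * X ω)) μ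
  mgf_le (t : ℝ) (ht : 0 ≤ t) (hts : t * s < 1) :
    mgf X μ t ≤ Real.exp (t ^ 2 * v / (2 * (1 - t * s)))

lemma HasSubgammaMGF.comp_hasLaw {ν : Measure Ω'} {Y : Ω' → ℝ} {x : Ω → Ω'}
    (h : HasSubgammaMGF Y v s ν) (hx : HasLaw x ν μ) : HasSubgammaMGF (Y ∘ x) v s μ := by
  obtain ⟨hx_meas, rfl⟩ := hx
  refine ⟨fun t ht hts ↦ (h.integrable_exp_mul t ht hts).comp_aemeasurable hx_meas,
    fun t ht hts ↦ ?_⟩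
  rw [← mgf_map hx_meas (h.integrable_exp_mul t ht hts).aestronglyMeasurable]
  exact h.mgf_le t ht hts

lemma HasSubgammaMGF.sum {ι : Type*} [Fintype ι] {X : ι → Ω → ℝ} {v : ι → ℝ}
    (h_indep : iIndepFun X μ) (h_meas : ∀ i, Measurable (X i))
    (h : ∀ i, HasSubgammaMGF (X i) (v i) s μ) :
    HasSubgammaMGF (∑ i, X i) (∑ i, v i) s μ := by
  have := h_indep.isProbabilityMeasure
  refine ⟨fun t ht hts ↦ h_indep.integrable_exp_mul_sum h_meas
    fun i _ ↦ (h i).integrable_exp_mul t ht hts, fun t ht hts ↦ ?_⟩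
  rw [h_indep.mgf_sum h_meas, Finset.mul_sum, Finset.sum_div, Real.exp_sum]
  exact Finset.prod_le_prod (fun _ _ ↦ mgf_nonneg) fun i _ ↦ (h i).mgf_le t ht hts

-- The Chernoff bound at `t = 2δ / (c + 2δs)`, which is optimal when `2δv = c²`.
lemma HasSubgammaMGF.measureReal_ge_le [IsFiniteMeasure μ] (h : HasSubgammaMGF X v s μ)
    (hs : 0 ≤ s) (hδ : 0 ≤ δ) {c : ℝ} (hc : 0 < c) (hvc : 2 * δ * v ≤ c ^ 2) :
    μ.real {ω | c + δ * s ≤ X ω} ≤ Real.exp (-δ) := by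
  set t := 2 * δ / (c + 2 * δ * s) with ht
  have ht0 : 0 ≤ t := by positivity
  have one_sub_eq : 1 - t * s = c / (c + 2 * δ * s) := by rw [ht]; field_simp; ring
  have hts : t * s < 1 := by
    have : 0 < c / (c + 2 * δ * s) := by positivity
    linarith
  have exponent_le : -t * (c + δ * s) + t ^ 2 * v / (2 * (1 - t * s)) ≤ -δ := calc
    _ = -t * (c + δ * s) + δ * (2 * δ * v) / (c * (c + 2 * δ * s)) := by
      rw [one_sub_eq, ht]; field_simp
    _ ≤ -t * (c + δ * s) + δ * c ^ 2 / (c * (c + 2 * δ * s)) := by gcongr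
    _ = -δ := by rw [ht]; field_simp; ring
  calc μ.real {ω | c + δ * s ≤ X ω}
      ≤ Real.exp (-t * (c + δ * s)) * mgf X μ t :=
        measure_ge_le_exp_mul_mgf _ ht0 (h.integrable_exp_mul t ht0 hts)
    _ ≤ Real.exp (-t * (c + δ * s)) * Real.exp (t ^ 2 * v / (2 * (1 - t * s))) := by
        gcongr; exact h.mgf_le t ht0 hts
    _ ≤ Real.exp (-δ) := by rwa [← Real.exp_add, Real.exp_le_exp]

lemma measure_lt_le_of_forall_measure_le_le {α : Type*} [LinearOrder α] [TopologicalSpace α]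
    [OrderTopology α] [DenselyOrdered α] [NoMaxOrder α] [FirstCountableTopology α]
    {X : Ω → α} {a : α} {B : ℝ≥0∞} (h : ∀ b > a, μ {ω | b ≤ X ω} ≤ B) :
    μ {ω | a < X ω} ≤ B := by
  obtain ⟨b, hb_anti, hab, hb_lim⟩ := exists_seq_strictAnti_tendsto a
  have lt_eq_iUnion : {ω | a < X ω} = ⋃ n, {ω | b n ≤ X ω} := by
    ext ω
    simp only [Set.mem_ofPred_eq, Set.mem_iUnion]
    exact ⟨fun hω ↦ ((hb_lim.eventually_lt_const hω).exists).imp fun _ ↦ le_of_lt,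
      fun ⟨n, hn⟩ ↦ (hab n).trans_le hn⟩
  have monotone_le : Monotone fun n ↦ {ω | b n ≤ X ω} :=
    fun _ _ hmn _ hω ↦ (hb_anti.antitone hmn).trans hω
  rw [lt_eq_iUnion, monotone_le.measure_iUnion]
  exact iSup_le fun n ↦ h _ (hab n)

-- The inequality is strict because `v = s = 0` is allowed, for instance with `X = 0`.
lemma HasSubgammaMGF.measure_gt_le [IsFiniteMeasure μ] (h : HasSubgammaMGF X v s μ)
    (hs : 0 ≤ s) (hδ : 0 ≤ δ) :
    μ {ω | √(2 * δ) * √v + δ * s < X ω} ≤ ENNReal.ofReal (Real.exp (-δ)) := by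
  refine measure_lt_le_of_forall_measure_le_le fun b hb ↦ ?_
  have sqrt_lt : √(2 * δ * v) < b - δ * s := by
    rw [Real.sqrt_mul (by positivity)]
    linarith
  have hc : 0 < b - δ * s := (Real.sqrt_nonneg _).trans_lt sqrt_lt
  rw [← ofReal_measureReal]
  refine ENNReal.ofReal_le_ofReal ?_
  simpa only [sub_add_cancel] using
    h.measureReal_ge_le hs hδ hc ((Real.sqrt_lt' hc).1 sqrt_lt).le

lemma HasSubgammaMGF.one_sub_exp_neg_le_measure_le [IsProbabilityMeasure μ]
    (h : HasSubgammaMGF X v s μ) (hs : 0 ≤ s) (hδ : 0 ≤ δ) :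
    ENNReal.ofReal (1 - Real.exp (-δ)) ≤ μ {ω | X ω ≤ √(2 * δ) * √v + δ * s} := by
  rw [ENNReal.ofReal_sub _ (Real.exp_nonneg _), ENNReal.ofReal_one, tsub_le_iff_left]
  calc 1 = μ ({ω | √(2 * δ) * √v + δ * s < X ω} ∪ {ω | X ω ≤ √(2 * δ) * √v + δ * s}) := by
        simp [← Set.ofPred_or, lt_or_ge]
    _ ≤ _ := measure_union_le _ _
    _ ≤ _ := by gcongr; exact h.measure_gt_le hs hδ

end SubGamma

section LogBound

variable {a c : ℝ}

-- With `w = -log (1 - a) ≥ 0` this is `w ≤ sinh w`.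
lemma neg_sub_log_one_sub_le_of_nonneg (ha : 0 ≤ a) (ha1 : a < 1) :
    -a - Real.log (1 - a) ≤ a ^ 2 / (2 * (1 - a)) := by
  have h1a : 0 < 1 - a := by linarith
  have hw : 0 ≤ -Real.log (1 - a) := neg_nonneg.2 (Real.log_nonpos h1a.le (by linarith))
  have le_sinh := Real.self_le_sinh_iff.2 hw
  rw [Real.sinh_eq, neg_neg, Real.exp_neg, Real.exp_log h1a] at le_sinh
  have sinh_eq : ((1 - a)⁻¹ - (1 - a)) / 2 = a + a ^ 2 / (2 * (1 - a)) := by field_simp; ring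
  linarith

lemma neg_sub_log_one_sub_le_of_nonpos (ha : a ≤ 0) : -a - Real.log (1 - a) ≤ a ^ 2 / 2 := by
  have log_ge : 2 * -a / (-a + 2) ≤ Real.log (1 - a) := by
    simpa only [sub_eq_add_neg] using Real.le_log_one_add_of_nonneg (neg_nonneg.2 ha)
  have le_div : -a - a ^ 2 / 2 ≤ 2 * -a / (-a + 2) := by
    rw [le_div_iff₀ (by linarith)]
    nlinarith [pow_nonneg (neg_nonneg.2 ha) 3]
  linarith

lemma neg_sub_log_one_sub_le (hac : a ≤ c) (hc0 : 0 ≤ c) (hc1 : c < 1) :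
    -a - Real.log (1 - a) ≤ a ^ 2 / (2 * (1 - c)) := by
  rcases le_total 0 a with ha | ha
  · exact (neg_sub_log_one_sub_le_of_nonneg ha (hac.trans_lt hc1)).trans (by gcongr)
  · refine (neg_sub_log_one_sub_le_of_nonpos ha).trans ?_
    gcongr; linarith

end LogBound

section GaussianReal

variable {v : ℝ≥0} {a : ℝ}

-- Completing the square: an exponential-quadratic tilt of a Gaussian density is again Gaussian.
lemma gaussianPDFReal_mul_exp_quadratic (hv : v ≠ 0) (ha : 2 * v * a < 1) (b x : ℝ) :
    gaussianPDFReal 0 v x * Real.exp (a * x ^ 2 + b * x) =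
      (√(1 - 2 * v * a))⁻¹ * Real.exp (v * b ^ 2 / (2 * (1 - 2 * v * a))) *
        gaussianPDFReal (v * b / (1 - 2 * v * a)) (v / (1 - 2 * v * a)).toNNReal x := by
  have hd : 0 < 1 - 2 * v * a := by linarith
  have sqrt_eq : √(2 * Real.pi * (v / (1 - 2 * v * a))) =
      √(2 * Real.pi * v) / √(1 - 2 * v * a) := by
    rw [← Real.sqrt_div (by positivity), mul_div_assoc]
  rw [gaussianPDFReal, gaussianPDFReal, Real.coe_toNNReal _ (by positivity), sqrt_eq, mul_assoc,
    ← Real.exp_add, mul_mul_mul_comm, ← Real.exp_add]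
  congr 1
  · field_simp
  · congr 1
    field_simp
    ring

lemma integrable_exp_quadratic_gaussianReal (ha : 2 * v * a < 1) (b : ℝ) :
    Integrable (fun x ↦ Real.exp (a * x ^ 2 + b * x)) (gaussianReal 0 v) := by
  rcases eq_or_ne v 0 with rfl | hv
  · rw [gaussianReal_zero_var]
    exact integrable_dirac (by simp)
  · rw [gaussianReal_of_var_ne_zero _ hv, integrable_withDensity_iff_integrable_smul'
      (measurable_gaussianPDF _ _) (by simp [gaussianPDF])]
    simp only [toReal_gaussianPDF, smul_eq_mul, gaussianPDFReal_mul_exp_quadratic hv ha]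
    exact (integrable_gaussianPDFReal _ _).const_mul _

lemma integral_exp_quadratic_gaussianReal (ha : 2 * v * a < 1) (b : ℝ) :
    ∫ x, Real.exp (a * x ^ 2 + b * x) ∂gaussianReal 0 v =
      (√(1 - 2 * v * a))⁻¹ * Real.exp (v * b ^ 2 / (2 * (1 - 2 * v * a))) := by
  rcases eq_or_ne v 0 with rfl | hv
  · simp
  · have hv' : (v / (1 - 2 * v * a) : ℝ).toNNReal ≠ 0 := by
      have : 0 < 1 - 2 * v * a := by linarith
      have : (0 : ℝ) < v := by positivity
      rw [Ne, Real.toNNReal_eq_zero, not_le]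
      positivity
    simp only [integral_gaussianReal_eq_integral_smul hv, smul_eq_mul,
      gaussianPDFReal_mul_exp_quadratic hv ha, integral_const_mul,
      integral_gaussianPDFReal_eq_one _ hv', mul_one]

end GaussianReal

section UnitaryDiagonalization

variable {𝕜 m n : Type*} [RCLike 𝕜] [Fintype m] [Fintype n]

lemma ofReal_sum_norm_sq_eq_trace (A : Matrix m n 𝕜) :
    ((∑ i, ∑ j, ‖A i j‖ ^ 2 : ℝ) : 𝕜) = (A * Aᴴ).trace := by
  simp [trace, Matrix.mul_apply, RCLike.mul_conj]

variable [DecidableEq n]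

lemma star_mulVec_dotProduct_mulVec {R : Type*} [CommRing R] [StarRing R] {U : Matrix n n R}
    (hU : U ∈ unitaryGroup n R) (x y : n → R) :
    star (U *ᵥ x) ⬝ᵥ (U *ᵥ y) = star x ⬝ᵥ y := by
  rw [star_mulVec, ← dotProduct_mulVec, mulVec_mulVec, ← star_eq_conjTranspose,
    mem_unitaryGroup_iff'.1 hU, one_mulVec]

lemma sum_norm_sq_mulVec {U : Matrix n n 𝕜} (hU : U ∈ unitaryGroup n 𝕜) (x : n → 𝕜) :
    ∑ i, ‖(U *ᵥ x) i‖ ^ 2 = ∑ i, ‖x i‖ ^ 2 := by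
  have ofReal_sum_eq (y : n → 𝕜) : ((∑ i, ‖y i‖ ^ 2 : ℝ) : 𝕜) = star y ⬝ᵥ y := by
    simp [dotProduct, RCLike.conj_mul]
  rw [← RCLike.ofReal_inj (K := 𝕜), ofReal_sum_eq, ofReal_sum_eq, star_mulVec_dotProduct_mulVec hU]

variable {A : Matrix n n 𝕜}

lemma star_dotProduct_mulVec_eq_sum_eigenvalues (hA : A.IsHermitian) (x : n → 𝕜) :
    star x ⬝ᵥ A *ᵥ x =
      ((∑ i, hA.eigenvalues i * ‖((star hA.eigenvectorUnitary : Matrix n n 𝕜) *ᵥ x) i‖ ^ 2 : ℝ) :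
        𝕜) := by
  have star_vecMul : star x ᵥ* (hA.eigenvectorUnitary : Matrix n n 𝕜) =
      star ((star hA.eigenvectorUnitary : Matrix n n 𝕜) *ᵥ x) := by
    rw [star_mulVec, star_eq_conjTranspose, conjTranspose_conjTranspose]
  conv_lhs => rw [hA.spectral_theorem, Unitary.conjStarAlgAut_apply, ← mulVec_mulVec,
    ← mulVec_mulVec, dotProduct_mulVec, star_vecMul]
  rw [RCLike.ofReal_sum]
  refine Finset.sum_congr rfl fun i _ ↦ ?_
  rw [mulVec_diagonal, mul_left_comm, Function.comp_apply, Pi.star_apply, RCLike.star_def,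
    RCLike.conj_mul, RCLike.ofReal_mul, RCLike.ofReal_pow]

lemma sum_norm_sq_eq_sum_eigenvalues_sq (hA : A.IsHermitian) :
    ∑ i, ∑ j, ‖A i j‖ ^ 2 = ∑ i, hA.eigenvalues i ^ 2 := by
  rw [← RCLike.ofReal_inj (K := 𝕜), ofReal_sum_norm_sq_eq_trace, hA.eq]
  conv_lhs => rw [hA.spectral_theorem, ← map_mul, diagonal_mul_diagonal,
    Unitary.conjStarAlgAut_apply, trace_mul_cycle, Unitary.coe_star_mul_self, one_mul,
    trace_diagonal]
  simp [sq]

end UnitaryDiagonalization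

section ComplexGaussian

/-- The law `CN(0, 1)` of a standard circularly symmetric complex Gaussian variable: its real and
imaginary parts are independent with variance `1 / 2`, so that `𝔼 |z|² = 1`. -/
def circularGaussian : Measure ℂ :=
  ((gaussianReal 0 (1 / 2)).prod (gaussianReal 0 (1 / 2))).map Complex.measurableEquivRealProd.symm

instance : IsProbabilityMeasure circularGaussian :=
  Measure.isProbabilityMeasure_map Complex.measurableEquivRealProd.symm.measurable.aemeasurable

lemma charFun_circularGaussian (t : ℂ) :
    charFun circularGaussian t = Complex.exp (-(‖t‖ ^ 2 / 4 : ℝ)) := by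
  have exp_inner (p : ℝ × ℝ) :
      Complex.exp ((inner ℝ (Complex.measurableEquivRealProd.symm p) t : ℝ) * Complex.I) =
        Complex.exp (t.re * p.1 * Complex.I) * Complex.exp (t.im * p.2 * Complex.I) := by
    rw [← Complex.exp_add, Complex.inner]
    simp only [Complex.measurableEquivRealProd_symm_apply, Complex.mul_re, Complex.conj_re,
      Complex.conj_im]
    push_cast
    ring_nf
  rw [charFun_apply, circularGaussian, integral_map_equiv]
  simp only [exp_inner]
  rw [integral_prod_mul (fun x : ℝ ↦ Complex.exp (t.re * x * Complex.I))
      (fun x : ℝ ↦ Complex.exp (t.im * x * Complex.I)),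
    ← charFun_apply_real, ← charFun_apply_real, charFun_gaussianReal, charFun_gaussianReal,
    ← Complex.exp_add, ← Complex.normSq_eq_norm_sq, Complex.normSq_apply]
  congr 1
  push_cast
  simp only [mul_zero, zero_mul, one_div, zero_sub]
  ring

section Mgf

variable {a : ℝ}

lemma exp_quadratic_measurableEquivRealProd_symm (q : ℂ) (p : ℝ × ℝ) :
    Real.exp (a * ‖Complex.measurableEquivRealProd.symm p‖ ^ 2 +
        2 * (star (Complex.measurableEquivRealProd.symm p) * q).re) =
      Real.exp (a * p.1 ^ 2 + 2 * q.re * p.1) * Real.exp (a * p.2 ^ 2 + 2 * q.im * p.2) := by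
  rw [← Real.exp_add, ← Complex.normSq_eq_norm_sq, Complex.normSq_apply]
  congr 1
  simp only [Complex.measurableEquivRealProd_symm_apply, Complex.star_def, Complex.mul_re,
    Complex.conj_re, Complex.conj_im]
  ring

lemma integrable_exp_quadratic_circularGaussian (ha : a < 1) (q : ℂ) :
    Integrable (fun z : ℂ ↦ Real.exp (a * ‖z‖ ^ 2 + 2 * (star z * q).re)) circularGaussian := by
  rw [circularGaussian, integrable_map_equiv]
  simp only [Function.comp_def, exp_quadratic_measurableEquivRealProd_symm]
  exact (integrable_exp_quadratic_gaussianReal (by simpa) _).mul_prod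
    (integrable_exp_quadratic_gaussianReal (by simpa) _)

lemma integral_exp_quadratic_circularGaussian (ha : a < 1) (q : ℂ) :
    ∫ z : ℂ, Real.exp (a * ‖z‖ ^ 2 + 2 * (star z * q).re) ∂circularGaussian =
      (1 - a)⁻¹ * Real.exp (‖q‖ ^ 2 / (1 - a)) := by
  have hd : 0 < 1 - a := by linarith
  have integral_real (b : ℝ) : ∫ x, Real.exp (a * x ^ 2 + 2 * b * x) ∂gaussianReal 0 (1 / 2) =
      (√(1 - a))⁻¹ * Real.exp (b ^ 2 / (1 - a)) := by
    rw [integral_exp_quadratic_gaussianReal (by simpa)]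
    push_cast
    field_simp
  rw [circularGaussian, integral_map_equiv]
  simp only [exp_quadratic_measurableEquivRealProd_symm]
  rw [integral_prod_mul (fun x : ℝ ↦ Real.exp (a * x ^ 2 + 2 * q.re * x))
      (fun x : ℝ ↦ Real.exp (a * x ^ 2 + 2 * q.im * x)), integral_real, integral_real,
    mul_mul_mul_comm, ← Real.exp_add, ← mul_inv, Real.mul_self_sqrt hd.le, ← add_div,
    ← Complex.normSq_eq_norm_sq, Complex.normSq_apply, sq, sq]

end Mgf

lemma hasSubgammaMGF_circularGaussian {m s : ℝ} (hms : m ≤ s) (hs : 0 ≤ s) (q : ℂ) :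
    HasSubgammaMGF (fun z : ℂ ↦ m * (‖z‖ ^ 2 - 1) + 2 * (star z * q).re) (m ^ 2 + 2 * ‖q‖ ^ 2) s
      circularGaussian := by
  have exp_eq (t : ℝ) (z : ℂ) : Real.exp (t * (m * (‖z‖ ^ 2 - 1) + 2 * (star z * q).re)) =
      Real.exp (-(t * m)) * Real.exp (t * m * ‖z‖ ^ 2 + 2 * (star z * (t * q)).re) := by
    rw [← Real.exp_add, mul_left_comm (star z), Complex.re_ofReal_mul]
    ring_nf
  have tm_le {t : ℝ} (ht : 0 ≤ t) : t * m ≤ t * s := mul_le_mul_of_nonneg_left hms ht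
  refine ⟨fun t ht hts ↦ ?_, fun t ht hts ↦ ?_⟩
  · simp only [exp_eq]
    exact (integrable_exp_quadratic_circularGaussian ((tm_le ht).trans_lt hts) _).const_mul _
  have htm : t * m < 1 := (tm_le ht).trans_lt hts
  have log_bound : -(t * m) - Real.log (1 - t * m) ≤ (t * m) ^ 2 / (2 * (1 - t * s)) :=
    neg_sub_log_one_sub_le (tm_le ht) (by positivity) hts
  have shift_bound : ‖t * q‖ ^ 2 / (1 - t * m) ≤ ‖t * q‖ ^ 2 / (1 - t * s) := by
    gcongr
  have norm_sq : ‖t * q‖ ^ 2 = t ^ 2 * ‖q‖ ^ 2 := by simp [mul_pow]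
  calc mgf _ circularGaussian t
      = Real.exp (-(t * m)) * ((1 - t * m)⁻¹ * Real.exp (‖t * q‖ ^ 2 / (1 - t * m))) := by
        simp only [mgf, exp_eq, integral_const_mul, integral_exp_quadratic_circularGaussian htm]
    _ = Real.exp (-(t * m) - Real.log (1 - t * m) + ‖t * q‖ ^ 2 / (1 - t * m)) := by
        rw [Real.exp_add, Real.exp_sub, Real.exp_log (by linarith)]
        ring
    _ ≤ Real.exp ((t * m) ^ 2 / (2 * (1 - t * s)) + ‖t * q‖ ^ 2 / (1 - t * s)) := by
        gcongr
    _ = Real.exp (t ^ 2 * (m ^ 2 + 2 * ‖q‖ ^ 2) / (2 * (1 - t * s))) := by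
        have : 1 - t * s ≠ 0 := by linarith
        rw [norm_sq]
        field_simp

variable {ι : Type*} [Fintype ι]

lemma hasSubgammaMGF_pi_circularGaussian {m : ι → ℝ} {s : ℝ} (hms : ∀ i, m i ≤ s) (hs : 0 ≤ s)
    (q : ι → ℂ) :
    HasSubgammaMGF (∑ i, fun z : ι → ℂ ↦ m i * (‖z i‖ ^ 2 - 1) + 2 * (star (z i) * q i).re)
      (∑ i, (m i ^ 2 + 2 * ‖q i‖ ^ 2)) s (Measure.pi fun _ ↦ circularGaussian) := by
  refine HasSubgammaMGF.sum (iIndepFun_pi (μ := fun _ : ι ↦ circularGaussian)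
    (X := fun i (z : ℂ) ↦ m i * (‖z‖ ^ 2 - 1) + 2 * (star z * q i).re)
    fun i ↦ by fun_prop) (fun i ↦ by fun_prop) fun i ↦ ?_
  exact (hasSubgammaMGF_circularGaussian (hms i) hs (q i)).comp_hasLaw
    (measurePreserving_eval (fun _ ↦ circularGaussian) i).hasLaw

lemma charFun_map_toLp (μ : Measure (ι → ℂ)) (t : EuclideanSpace ℂ ι) :
    charFun (μ.map (WithLp.toLp 2)) t =
      ∫ x, Complex.exp ((star x ⬝ᵥ t.ofLp).re * Complex.I) ∂μ := by
  have inner_toLp (x : ι → ℂ) : inner ℝ (WithLp.toLp 2 x) t = (star x ⬝ᵥ t.ofLp).re := by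
    simp only [PiLp.inner_apply, dotProduct, Complex.inner, Complex.re_sum, Pi.star_apply,
      Complex.star_def, mul_comm]
  rw [charFun_apply, integral_map (by fun_prop) (by fun_prop)]
  simp only [inner_toLp]

lemma charFun_map_toLp_pi_circularGaussian (t : EuclideanSpace ℂ ι) :
    charFun ((Measure.pi fun _ : ι ↦ circularGaussian).map (WithLp.toLp 2)) t =
      Complex.exp (-((∑ i, ‖t i‖ ^ 2) / 4 : ℝ)) := by
  rw [charFun_pi]
  simp only [charFun_circularGaussian, ← Complex.exp_sum, Finset.sum_neg_distrib,
    ← Complex.ofReal_sum, Finset.sum_div]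

variable [DecidableEq ι]

lemma measurePreserving_mulVec_pi_circularGaussian {U : Matrix ι ι ℂ}
    (hU : U ∈ unitaryGroup ι ℂ) :
    MeasurePreserving (U *ᵥ ·) (Measure.pi fun _ ↦ circularGaussian)
      (Measure.pi fun _ ↦ circularGaussian) := by
  have measurable_mulVec : Measurable (U *ᵥ ·) :=
    (continuous_const.matrix_mulVec continuous_id).measurable
  have star_mulVec_dotProduct (x t : ι → ℂ) :
      star (U *ᵥ x) ⬝ᵥ t = star x ⬝ᵥ (star U *ᵥ t) := by
    rw [star_mulVec, ← dotProduct_mulVec, star_eq_conjTranspose]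
  refine ⟨measurable_mulVec, ?_⟩
  have := Measure.isProbabilityMeasure_map (μ := Measure.pi fun _ : ι ↦ circularGaussian)
    measurable_mulVec.aemeasurable
  refine charFun_eq_pi_iff.1 fun t ↦ ?_
  rw [← charFun_pi]
  calc charFun (((Measure.pi fun _ ↦ circularGaussian).map (U *ᵥ ·)).map (WithLp.toLp 2)) t
      = charFun ((Measure.pi fun _ ↦ circularGaussian).map (WithLp.toLp 2))
          (WithLp.toLp 2 (star U *ᵥ t.ofLp)) := by
        rw [charFun_map_toLp, charFun_map_toLp, integral_map measurable_mulVec.aemeasurable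
          (by fun_prop)]
        simp only [star_mulVec_dotProduct]
    _ = charFun ((Measure.pi fun _ ↦ circularGaussian).map (WithLp.toLp 2)) t := by
        rw [charFun_map_toLp_pi_circularGaussian, charFun_map_toLp_pi_circularGaussian,
          sum_norm_sq_mulVec (Unitary.star_mem hU)]

lemma hasSubgammaMGF_quadraticForm {A : Matrix ι ι ℂ} (hA : A.IsHermitian) (u : ι → ℂ) {s : ℝ}
    (hAs : ∀ i, hA.eigenvalues i ≤ s) (hs : 0 ≤ s) :
    HasSubgammaMGF (fun x ↦ (star x ⬝ᵥ A *ᵥ x).re - A.trace.re + 2 * (star x ⬝ᵥ u).re)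
      (∑ i, ∑ j, ‖A i j‖ ^ 2 + 2 * ∑ i, ‖u i‖ ^ 2) s (Measure.pi fun _ ↦ circularGaussian) := by
  set W : Matrix ι ι ℂ := star hA.eigenvectorUnitary
  have hWU : W ∈ unitaryGroup ι ℂ := Unitary.star_mem hA.eigenvectorUnitary.2
  have diagonalized := (hasSubgammaMGF_pi_circularGaussian hAs hs (W *ᵥ u)).comp_hasLaw
    (measurePreserving_mulVec_pi_circularGaussian hWU).hasLaw
  convert diagonalized using 1
  · ext x
    have quadratic_eq :
        (star x ⬝ᵥ A *ᵥ x).re = ∑ i, hA.eigenvalues i * ‖(W *ᵥ x) i‖ ^ 2 := by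
      rw [star_dotProduct_mulVec_eq_sum_eigenvalues hA]
      exact Complex.ofReal_re _
    have linear_eq : (star x ⬝ᵥ u).re = ∑ i, (star ((W *ᵥ x) i) * (W *ᵥ u) i).re := by
      rw [← star_mulVec_dotProduct_mulVec hWU, dotProduct, Complex.re_sum]
      rfl
    have trace_eq : A.trace.re = ∑ i, hA.eigenvalues i := by
      rw [hA.trace_eq_sum_eigenvalues, ← RCLike.ofReal_sum]
      exact Complex.ofReal_re _
    simp only [Function.comp_apply, Finset.sum_apply, quadratic_eq, linear_eq, trace_eq, mul_sub,
      mul_one, Finset.mul_sum, Finset.sum_add_distrib, Finset.sum_sub_distrib]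
  · rw [sum_norm_sq_eq_sum_eigenvalues_sq hA, ← sum_norm_sq_mulVec hWU u, Finset.mul_sum,
      Finset.sum_add_distrib]

theorem bernstein_type_inequality_general {Ω : Type*} {mΩ : MeasurableSpace Ω} {P : Measure Ω}
    {x : Ω → ι → ℂ} (hx : HasLaw x (Measure.pi fun _ ↦ circularGaussian) P)
    {Y : Matrix ι ι ℂ} (hY : Y.IsHermitian) (u : ι → ℂ) {s δ : ℝ}
    (hYs : ∀ i, hY.neg.eigenvalues i ≤ s) (hs : 0 ≤ s) (hδ : 0 ≤ δ) :
    ENNReal.ofReal (1 - Real.exp (-δ)) ≤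
      P {ω | Y.trace.re - √(2 * δ) * √(∑ i, ∑ j, ‖Y i j‖ ^ 2 + 2 * ∑ i, ‖u i‖ ^ 2) - δ * s ≤
        (star (x ω) ⬝ᵥ Y *ᵥ x ω).re + 2 * (star (x ω) ⬝ᵥ u).re} := by
  have := hx.isProbabilityMeasure
  refine (((hasSubgammaMGF_quadraticForm hY.neg (-u) hYs hs).comp_hasLaw
    hx).one_sub_exp_neg_le_measure_le hs hδ).trans (measure_mono fun ω hω ↦ ?_)
  simp only [Function.comp_apply, neg_mulVec, dotProduct_neg, trace_neg, Matrix.neg_apply,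
    Pi.neg_apply, norm_neg, Complex.neg_re, Set.mem_ofPred_eq] at hω ⊢
  linarith

lemma hasLaw_toC (M : ℕ) :
    HasLaw toC (Measure.pi fun _ : Fin M ↦ circularGaussian) (stdComplexGaussian M) :=
  (measurePreserving_pi _ _ fun _ ↦
    Complex.measurableEquivRealProd.symm.measurable.measurePreserving _).hasLaw

end ComplexGaussian

/-- Bernstein-type inequality for complex Gaussian quadratic forms (Lemma 2 of the
paper): for `x ~ CN(0, I_M)` and `f(x) = xᴴ Y x + 2 Re(xᴴ u)`,
`Pr(f(x) ≥ Tr Y − √(2δ)·√(‖Y‖_F² + 2‖u‖²) − δ·s⁺(−Y)) ≥ 1 − e^{−δ}`. -/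
theorem bernstein_type_inequality (M : ℕ) (hM : 1 ≤ M)
    (Y : Matrix (Fin M) (Fin M) ℂ) (hY : Y.IsHermitian) (u : Fin M → ℂ)
    (δ : ℝ) (hδ : 0 < δ) :
    ENNReal.ofReal (1 - Real.exp (-δ)) ≤
      stdComplexGaussian M
        {w : Fin M → ℝ × ℝ |
          Y.trace.re - Real.sqrt (2 * δ) * Real.sqrt (fnorm Y ^ 2 + 2 * enorm' u ^ 2)
              - δ * max (lamMax hY.neg) 0 ≤
            (star (toC w) ⬝ᵥ Y.mulVec (toC w)).re + 2 * (star (toC w) ⬝ᵥ u).re} := by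
  rw [fnorm, enorm', Real.sq_sqrt (by positivity), Real.sq_sqrt (by positivity)]
  exact bernstein_type_inequality_general (hasLaw_toC M) hY u
    (fun i ↦ le_max_of_le_left (le_ciSup (Set.finite_range _).bddAbove i)) (le_max_right _ _) hδ.le
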